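/- For every real number ε > 0 there exists a real number δ > 0, depending only on n, p, α, ε, C₁ and C₂, with the following property: let r > 0, z ∈ ℝⁿ, and let v be a bounded nonnegative C¹ function on the open ball B_r(z) which is a solution of div A(x,Dv) + b(x)|Dv|^α ≥ 0 in B_r(z) and satisfies r^{p−α}·(sup_{B_r(z)} v)^{α−p+1}·(ess sup_{B_r(z)} b) ≤ C₁/2. If the Lebesgue measure of the set {x ∈ B_r(z) : v(x) > 0} is at most δ·rⁿ, then sup_{B_{r/8}(z)} v ≤ ε·sup_{B_r(z)} v. -/

import Mathlib

open MeasureTheory Metric Set Filter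
open scoped RealInnerProductSpace ENNReal

noncomputable section

abbrev Euc (n : ℕ) := EuclideanSpace ℝ (Fin n)

/-- Weak solution of `div A(x,Dv) + b(x)|Dv|^α ≥ a(x)` on an open set `U`:
for every nonnegative test function `φ ∈ C₀^∞(U)`,
`-∫ A(x,Dv)·Dφ + ∫ b |Dv|^α φ ≥ ∫ a φ`. -/
def IsWeakSol {n : ℕ} (A : Euc n → Euc n → Euc n) (b : Euc n → ℝ) (α : ℝ)
    (a : Euc n → ℝ) (U : Set (Euc n)) (v : Euc n → ℝ) : Prop :=
  ∀ φ : Euc n → ℝ, ContDiff ℝ (⊤ : ℕ∞) φ → HasCompactSupport φ → tsupport φ ⊆ U →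
    (∀ x, 0 ≤ φ x) →
    (∫ x in U, a x * φ x) ≤
      (-(∫ x in U, ⟪A x (gradient v x), gradient φ x⟫)) +
        ∫ x in U, b x * ‖gradient v x‖ ^ α * φ x

/-- Structural conditions on `A`: measurability, coercivity and growth. -/
def StructCond {n : ℕ} (A : Euc n → Euc n → Euc n) (p C₁ C₂ : ℝ) : Prop :=
  Measurable (Function.uncurry A) ∧
    ∀ x ζ : Euc n, C₁ * ‖ζ‖ ^ p ≤ ⟪ζ, A x ζ⟫ ∧ ‖A x ζ‖ ≤ C₂ * ‖ζ‖ ^ (p - 1)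

/-- Locally bounded function on `ℝⁿ`. -/
def LocBdd {n : ℕ} (b : Euc n → ℝ) : Prop :=
  ∀ K : Set (Euc n), IsCompact K → ∃ C, ∀ x ∈ K, b x ≤ C

/-- `M(r; u) = max_{|x| = r} u x`. -/
def sphMax {n : ℕ} (u : Euc n → ℝ) (r : ℝ) : ℝ := sSup (u '' Metric.sphere (0 : Euc n) r)

/-- `g_θ(t) = inf_{s ∈ (t/θ, θ t)} g s`. -/
def ginf (g : ℝ → ℝ) (θ t : ℝ) : ℝ := sInf (g '' Set.Ioo (t / θ) (θ * t))

/-- The open annulus `{x : r₁ < |x| < r₂}`. -/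
def Ann (n : ℕ) (r₁ r₂ : ℝ) : Set (Euc n) := {x : Euc n | r₁ < ‖x‖ ∧ ‖x‖ < r₂}

/-- `q_σ(r) = ess inf_{r/σ < |x| < σ r} q x`. -/
def qinf {n : ℕ} (q : Euc n → ℝ) (σ r : ℝ) : ℝ :=
  essInf q (volume.restrict (Ann n (r / σ) (σ * r)))

/-- `f_σ(r) = q_σ(r) / (1 + r q_σ(r)^{(α-p+1)/α} ess sup_{r/σ<|x|<σr} b^{(p-1)/α})`. -/
def fdef {n : ℕ} (q b : Euc n → ℝ) (p α σ r : ℝ) : ℝ :=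
  qinf q σ r /
    (1 + r * qinf q σ r ^ ((α - p + 1) / α) *
      essSup (fun x => b x ^ ((p - 1) / α)) (volume.restrict (Ann n (r / σ) (σ * r))))

/-!
De Giorgi iteration. After mollification the weak inequality may be tested with the `C¹` function
`φ = ((v - k)⁺)^p η^p`, where `η` is the cutoff `(1 - |x - z|² / ρ²)⁺`. The smallness of `b` at
scale `r` lets the coercivity of `A` absorb the lower order term, and Young's inequality then gives
the Caccioppoli estimate `∫ |Dφ| ≤ K (M^p / ρ) |{v > k} ∩ B_ρ|` with `M = sup v`. Keeping only the
`L¹` norm of the gradient, one needs the Sobolev inequality only with exponent `1`, whatever `p` is: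
applied to `φ` in weak-type form, it bounds `|{v > k'} ∩ B_ρ'|` by a power `1 + 1/(n-1)` of
`|{v > k} ∩ B_ρ|`. Along the levels `ε M (1 - 2⁻ʲ)` and radii `(r/8) (1 + 2⁻ʲ)` this recursion is
superlinear, so these measures tend to zero once `|{v > 0} ∩ B_r|` is a small multiple of `rⁿ`. The
set `{v > ε M} ∩ B_{r/8}` is therefore null, and being open it is empty.
-/

section PosPart

variable {p : ℝ}

theorem hasDerivAt_posPart_rpow (hp : 1 < p) (t : ℝ) :
    HasDerivAt (fun s : ℝ => s⁺ ^ p) (p * t⁺ ^ (p - 1)) t := by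
  have hpos {s : ℝ} (hs : 0 ≤ s) : HasDerivWithinAt (fun s : ℝ => s⁺ ^ p)
      (p * s⁺ ^ (p - 1)) (Ici 0) s := by
    rw [posPart_of_nonneg hs]
    exact (Real.hasDerivAt_rpow_const (Or.inr hp.le)).hasDerivWithinAt.congr
      (fun y hy => by rw [posPart_of_nonneg hy]) (by rw [posPart_of_nonneg hs])
  have hneg {s : ℝ} (hs : s ≤ 0) : HasDerivWithinAt (fun s : ℝ => s⁺ ^ p)
      (p * s⁺ ^ (p - 1)) (Iic 0) s := by
    rw [posPart_of_nonpos hs, Real.zero_rpow (by linarith), mul_zero]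
    have hzero (y : ℝ) (hy : y ≤ 0) : y⁺ ^ p = 0 := by
      rw [posPart_of_nonpos hy, Real.zero_rpow (by linarith)]
    exact (hasDerivWithinAt_const s (Iic 0) 0).congr hzero (hzero s hs)
  rcases lt_trichotomy t 0 with ht | rfl | ht
  · exact (hneg ht.le).hasDerivAt (Iic_mem_nhds ht)
  · have := (hneg le_rfl).union (hpos le_rfl)
    rwa [Iic_union_Ici, hasDerivWithinAt_univ] at this
  · exact (hpos ht.le).hasDerivAt (Ici_mem_nhds ht)

theorem contDiff_posPart_rpow (hp : 1 < p) : ContDiff ℝ 1 (fun s : ℝ => s⁺ ^ p) := by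
  rw [contDiff_one_iff_deriv]
  refine ⟨fun t => (hasDerivAt_posPart_rpow hp t).differentiableAt, ?_⟩
  rw [funext fun t => (hasDerivAt_posPart_rpow hp t).deriv]
  exact (continuous_posPart.rpow_const fun _ => Or.inr (by linarith)).const_mul p

end PosPart

section ScalarInequalities

variable {p : ℝ}

theorem mul_rpow_sub_one_mul_le (hp : 1 < p) {a c x t : ℝ} (ha : 0 < a) (hc : 0 < c)
    (hx : 0 ≤ x) (ht : 0 < t) :
    c * (x ^ (p - 1) * t) ≤ a * x ^ p + a * (c / a) ^ p * t ^ p := by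
  have hsplit {y : ℝ} (hy : 0 < y) : y ^ p = y ^ (p - 1) * y := by
    rw [Real.rpow_sub_one hy.ne', div_mul_cancel₀ _ hy.ne']
  rcases le_or_gt (c * t) (a * x) with htx | hxt
  · have hx' : 0 < x := pos_of_mul_pos_right ((mul_pos hc ht).trans_le htx) ha.le
    calc c * (x ^ (p - 1) * t) = x ^ (p - 1) * (c * t) := by ring
      _ ≤ x ^ (p - 1) * (a * x) := by gcongr
      _ = a * x ^ p := by rw [hsplit hx']; ring
      _ ≤ _ := le_add_of_nonneg_right (by positivity)
  · have hxle : x ≤ c / a * t := by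
      rw [div_mul_eq_mul_div, le_div_iff₀ ha]
      linarith
    calc c * (x ^ (p - 1) * t) ≤ c * ((c / a * t) ^ (p - 1) * t) := by gcongr
      _ = a * (c / a) ^ p * t ^ p := by
          rw [Real.mul_rpow (by positivity) ht.le, hsplit ht, hsplit (div_pos hc ha)]
          field_simp
      _ ≤ _ := le_add_of_nonneg_left (by positivity)

theorem le_rpow_one_sub_mul_rpow_add (hp : 1 < p) {x t : ℝ} (hx : 0 ≤ x) (ht : 0 < t) :
    x ≤ t ^ (1 - p) * x ^ p + t := by
  rcases le_or_gt x t with hxt | htx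
  · exact hxt.trans (le_add_of_nonneg_left (by positivity))
  · have hx' := ht.trans htx
    calc x = x ^ (1 - p) * x ^ p := by rw [← Real.rpow_add hx']; simp
      _ ≤ t ^ (1 - p) * x ^ p := by
          gcongr 1
          exact Real.rpow_le_rpow_of_nonpos ht htx.le (by linarith)
      _ ≤ _ := le_add_of_nonneg_right ht.le

theorem rpow_mul_rpow_sub_le {α x y : ℝ} (hα₀ : 0 ≤ α) (hα : α ≤ p) (hx : 0 ≤ x) (hy : 0 < y) :
    x ^ α * y ^ (p - α) ≤ x ^ p + y ^ p := by
  have hmax : 0 < max x y := lt_max_of_lt_right hy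
  calc x ^ α * y ^ (p - α) ≤ max x y ^ α * max x y ^ (p - α) := by
        gcongr
        exacts [le_max_left _ _, le_max_right _ _]
    _ = max x y ^ p := by rw [← Real.rpow_add hmax, add_sub_cancel]
    _ ≤ x ^ p + y ^ p := by
        rcases max_choice x y with h | h <;> rw [h]
        · exact le_add_of_nonneg_right (by positivity)
        · exact le_add_of_nonneg_left (by positivity)

theorem mul_rpow_mul_le_of_rescaled_le {α C r M β x : ℝ} (hα₀ : 0 ≤ α) (hα : α ≤ p)
    (hC : 0 ≤ C) (hr : 0 < r) (hM : 0 < M) (hx : 0 ≤ x)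
    (hβ : r ^ (p - α) * M ^ (α - p + 1) * β ≤ C) :
    β * x ^ α * M ≤ C * (x ^ p + (M / r) ^ p) := by
  have hM_split : M = M ^ (α - p + 1) * M ^ (p - α) := by
    rw [← Real.rpow_add hM, show α - p + 1 + (p - α) = 1 by ring, Real.rpow_one]
  calc β * x ^ α * M
      = r ^ (p - α) * M ^ (α - p + 1) * β * (x ^ α * (M / r) ^ (p - α)) := by
        rw [Real.div_rpow hM.le hr.le]
        nth_rw 1 [hM_split]
        field_simp
    _ ≤ C * (x ^ p + (M / r) ^ p) := by
        gcongr
        exact rpow_mul_rpow_sub_le hα₀ hα hx (by positivity)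

theorem cutoff_rpow_le_two_mul_add {T x η s : ℝ} (hp : 1 < p) (hT : 0 < T) (hx : 0 ≤ x)
    (hη₀ : 0 ≤ η) (hη₁ : η ≤ 1) (hs : s ≤ T) :
    η ^ p * x + η ^ (p - 1) * s ≤ T ^ (1 - p) * (η * x) ^ p + 2 * T := by
  have hfirst : η ^ p * x ≤ T ^ (1 - p) * (η * x) ^ p + T := by
    refine le_trans ?_ (le_rpow_one_sub_mul_rpow_add hp (mul_nonneg hη₀ hx) hT)
    gcongr
    simpa using Real.rpow_le_rpow_of_exponent_ge' hη₀ hη₁ zero_le_one hp.le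
  have hsecond : η ^ (p - 1) * s ≤ T :=
    (mul_le_mul_of_nonneg_left hs (by positivity)).trans
      (mul_le_of_le_one_left hT.le (Real.rpow_le_one hη₀ hη₁ (by linarith)))
  linarith

-- To be read with `x = |Dv|`, `s = |(v - k) Dη|`, `T` a bound for `s`, and `B` the lower order term
-- multiplied by `v - k`: coercivity absorbs both the cross term and `B`.
theorem cutoff_rpow_le {C₁ C₂ T x η s B : ℝ} (hp : 1 < p) (hC₁ : 0 < C₁) (hC₂ : 0 < C₂)
    (hT : 0 < T) (hx : 0 ≤ x) (hη₀ : 0 ≤ η) (hη₁ : η ≤ 1) (hs : s ≤ T)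
    (hB : B ≤ C₁ / 2 * (x ^ p + T ^ p)) :
    η ^ p * x + η ^ (p - 1) * s ≤
      4 / C₁ * T ^ (1 - p) *
          (C₁ * η ^ p * x ^ p - C₂ * η ^ (p - 1) * x ^ (p - 1) * s - η ^ p * B) +
        (4 + (4 * C₂ / C₁) ^ p) * T := by
  have hcross : C₂ * η ^ (p - 1) * x ^ (p - 1) * s ≤
      C₁ / 4 * (η * x) ^ p + C₁ / 4 * (4 * C₂ / C₁) ^ p * T ^ p := by
    calc C₂ * η ^ (p - 1) * x ^ (p - 1) * s ≤ C₂ * η ^ (p - 1) * x ^ (p - 1) * T := by gcongr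
      _ = C₂ * ((η * x) ^ (p - 1) * T) := by rw [Real.mul_rpow hη₀ hx]; ring
      _ ≤ C₁ / 4 * (η * x) ^ p + C₁ / 4 * (C₂ / (C₁ / 4)) ^ p * T ^ p :=
          mul_rpow_sub_one_mul_le hp (by positivity) hC₂ (mul_nonneg hη₀ hx) hT
      _ = _ := by rw [div_div_eq_mul_div, mul_comm C₂]
  have hlower : η ^ p * B ≤ C₁ / 2 * ((η * x) ^ p + T ^ p) := by
    calc η ^ p * B ≤ η ^ p * (C₁ / 2 * (x ^ p + T ^ p)) := by gcongr
      _ = C₁ / 2 * ((η * x) ^ p + η ^ p * T ^ p) := by rw [Real.mul_rpow hη₀ hx]; ring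
      _ ≤ _ := by
          gcongr
          exact mul_le_of_le_one_left (by positivity)
            (Real.rpow_le_one hη₀ hη₁ (by linarith))
  have hT_split : T ^ (1 - p) * T ^ p = T := by rw [← Real.rpow_add hT]; simp
  have hbracket : C₁ / 4 * (η * x) ^ p - C₁ / 4 * (4 * C₂ / C₁) ^ p * T ^ p - C₁ / 2 * T ^ p ≤
      C₁ * η ^ p * x ^ p - C₂ * η ^ (p - 1) * x ^ (p - 1) * s - η ^ p * B := by
    rw [mul_assoc C₁, ← Real.mul_rpow hη₀ hx]
    linarith
  calc η ^ p * x + η ^ (p - 1) * s ≤ T ^ (1 - p) * (η * x) ^ p + 2 * T :=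
        cutoff_rpow_le_two_mul_add hp hT hx hη₀ hη₁ hs
    _ = 4 / C₁ * T ^ (1 - p) * (C₁ / 4 * (η * x) ^ p -
          C₁ / 4 * (4 * C₂ / C₁) ^ p * T ^ p - C₁ / 2 * T ^ p) +
        (4 + (4 * C₂ / C₁) ^ p) * T := by
      field_simp
      linear_combination (2 * (4 * C₂ / C₁) ^ p + 4) * hT_split
    _ ≤ _ := by gcongr

theorem norm_cutoff_smul_add_le {E : Type*} [NormedAddCommGroup E] [InnerProductSpace ℝ E]
    {C₁ C₂ T η B : ℝ} {ζ a θ : E} (hp : 1 < p) (hC₁ : 0 < C₁) (hC₂ : 0 < C₂) (hT : 0 < T)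
    (hη₀ : 0 ≤ η) (hη₁ : η ≤ 1) (hcoercive : C₁ * ‖ζ‖ ^ p ≤ ⟪ζ, a⟫)
    (hgrowth : ‖a‖ ≤ C₂ * ‖ζ‖ ^ (p - 1)) (hθ : ‖θ‖ ≤ T)
    (hB : B ≤ C₁ / 2 * (‖ζ‖ ^ p + T ^ p)) :
    ‖η ^ p • ζ + η ^ (p - 1) • θ‖ ≤
      4 / C₁ * T ^ (1 - p) * (⟪a, η ^ p • ζ + η ^ (p - 1) • θ⟫ - η ^ p * B) +
        (4 + (4 * C₂ / C₁) ^ p) * T := by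
  have hnorm : ‖η ^ p • ζ + η ^ (p - 1) • θ‖ ≤ η ^ p * ‖ζ‖ + η ^ (p - 1) * ‖θ‖ := by
    refine (norm_add_le _ _).trans_eq ?_
    rw [norm_smul, norm_smul, Real.norm_of_nonneg (by positivity),
      Real.norm_of_nonneg (by positivity)]
  have hinner : C₁ * η ^ p * ‖ζ‖ ^ p - C₂ * η ^ (p - 1) * ‖ζ‖ ^ (p - 1) * ‖θ‖ ≤
      ⟪a, η ^ p • ζ + η ^ (p - 1) • θ⟫ := by
    have hmain : η ^ p * (C₁ * ‖ζ‖ ^ p) ≤ η ^ p * ⟪a, ζ⟫ := by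
      rw [real_inner_comm]
      gcongr
    have hcross : η ^ (p - 1) * -⟪a, θ⟫ ≤ η ^ (p - 1) * (C₂ * ‖ζ‖ ^ (p - 1) * ‖θ‖) := by
      gcongr
      exact (neg_le_abs _).trans <| (abs_real_inner_le_norm a θ).trans <| by gcongr
    rw [inner_add_right, real_inner_smul_right, real_inner_smul_right]
    linarith
  refine hnorm.trans ((cutoff_rpow_le hp hC₁ hC₂ hT (norm_nonneg ζ) hη₀ hη₁ hθ hB).trans ?_)
  gcongr

theorem mul_rpow_sub_one_mul_le_of_le {w M ρ N Q I β η K : ℝ} (hp : 1 < p) (hw₀ : 0 ≤ w)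
    (hw : w ≤ M) (hρ : 0 < ρ) (hQ : 0 ≤ Q) (hβ : 0 ≤ β) (hη : 0 ≤ η) (hK : 0 ≤ K)
    (hN : N ≤ Q * (I - η * (β * w)) + K * (2 * M / ρ)) :
    p * w ^ (p - 1) * N ≤ Q * (p * w ^ (p - 1) * I - β * (w ^ p * η)) +
      2 * p * K * M ^ p / ρ := by
  have hsplit {y : ℝ} (hy : 0 ≤ y) : y ^ p = y ^ (p - 1) * y := by
    rw [← Real.rpow_add_one' hy (by linarith), sub_add_cancel]
  have habsorb : Q * (β * (w ^ p * η)) ≤ p * (Q * (β * (w ^ p * η))) :=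
    le_mul_of_one_le_left (by positivity) hp.le
  calc p * w ^ (p - 1) * N ≤ p * w ^ (p - 1) * (Q * (I - η * (β * w)) + K * (2 * M / ρ)) := by
        gcongr
    _ = Q * (p * w ^ (p - 1) * I) - p * (Q * (β * (w ^ p * η))) +
          w ^ (p - 1) * (2 * p * K * M / ρ) := by rw [hsplit hw₀]; ring
    _ ≤ Q * (p * w ^ (p - 1) * I) - Q * (β * (w ^ p * η)) +
          M ^ (p - 1) * (2 * p * K * M / ρ) := by
        have := hw₀.trans hw
        gcongr
    _ = _ := by rw [hsplit (hw₀.trans hw)]; ring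

end ScalarInequalities

theorem tendsto_zero_of_pow_le_mul_pow {k : ℕ} (hk : k ≠ 0) {C L : ℝ} (hC : 0 < C) (hL : 1 < L)
    {y : ℕ → ℝ} (hy : ∀ j, 0 ≤ y j)
    (hstep : ∀ j, y (j + 1) ^ k ≤ (C * L ^ j * y j) ^ (k + 1))
    (hy₀ : y 0 ≤ 1 / (C ^ (k + 1) * L ^ ((k + 1) * k))) :
    Tendsto y atTop (nhds 0) := by
  have hL₀ : 0 < L := one_pos.trans hL
  set δ := 1 / (C ^ (k + 1) * L ^ ((k + 1) * k)) with hδ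
  set q := (1 / L) ^ (k + 1) with hq
  have hδ_eq : C ^ (k + 1) * δ = q ^ k := by
    rw [hδ, hq, ← pow_mul, one_div_pow]
    field_simp
  have hLq (j : ℕ) : (L ^ j) ^ (k + 1) * q ^ j = 1 := by
    rw [hq, pow_right_comm, ← mul_pow, ← mul_pow, mul_one_div_cancel hL₀.ne', one_pow, one_pow]
  have hgeom (j : ℕ) : y j ≤ δ * q ^ j := by
    induction j with
    | zero => simpa using hy₀
    | succ j ih =>
      have hpow : y (j + 1) ^ k ≤ (δ * q ^ (j + 1)) ^ k := by
        calc y (j + 1) ^ k ≤ (C * L ^ j * y j) ^ (k + 1) := hstep j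
          _ ≤ (C * L ^ j * (δ * q ^ j)) ^ (k + 1) := by
              have := hy j
              gcongr
          _ = C ^ (k + 1) * δ * ((L ^ j) ^ (k + 1) * q ^ j) * (δ * q ^ j) ^ k := by ring
          _ = (δ * q ^ (j + 1)) ^ k := by rw [hδ_eq, hLq]; ring
      exact (pow_le_pow_iff_left₀ (hy _) (by positivity) hk).1 hpow
  have hq_lt : q < 1 :=
    pow_lt_one₀ (by positivity) ((div_lt_one hL₀).2 hL) k.succ_ne_zero
  refine squeeze_zero hy hgeom ?_
  simpa using (tendsto_pow_atTop_nhds_zero_of_lt_one (by positivity) hq_lt).const_mul δ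

section Gradient

variable {E : Type*} [NormedAddCommGroup E] [InnerProductSpace ℝ E] [CompleteSpace E]

theorem norm_gradient (f : E → ℝ) (x : E) : ‖gradient f x‖ = ‖fderiv ℝ f x‖ :=
  LinearIsometryEquiv.norm_map _ _

theorem norm_gradient_sub (f g : E → ℝ) (x : E) :
    ‖gradient f x - gradient g x‖ = ‖fderiv ℝ f x - fderiv ℝ g x‖ := by
  rw [gradient, gradient, ← map_sub, LinearIsometryEquiv.norm_map]

theorem gradient_of_notMem_tsupport {f : E → ℝ} {x : E} (hx : x ∉ tsupport f) :
    gradient f x = 0 := by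
  rw [gradient, fderiv_of_notMem_tsupport ℝ hx, map_zero]

theorem continuous_gradient {f : E → ℝ} (hf : ContDiff ℝ 1 f) : Continuous (gradient f) :=
  (LinearIsometryEquiv.continuous _).comp (hf.continuous_fderiv one_ne_zero)

theorem hasCompactSupport_gradient {f : E → ℝ} (hf : HasCompactSupport f) :
    HasCompactSupport (gradient f) :=
  (hf.fderiv ℝ).comp_left (map_zero _)

theorem continuousOn_gradient {f : E → ℝ} {U : Set E} (hU : IsOpen U) (hf : ContDiffOn ℝ 1 f U) :
    ContinuousOn (gradient f) U :=
  (LinearIsometryEquiv.continuous _).comp_continuousOn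
    (hf.continuousOn_fderiv_of_isOpen hU le_rfl)

theorem measurable_gradient [MeasurableSpace E] [BorelSpace E] (f : E → ℝ) :
    Measurable (gradient f) :=
  (LinearIsometryEquiv.continuous _).measurable.comp (measurable_fderiv ℝ f)

theorem mul_sub_inner_gradient_of_notMem_tsupport {φ : E → ℝ} {x : E} (hx : x ∉ tsupport φ)
    (g : ℝ) (ξ : E) : g * φ x - ⟪ξ, gradient φ x⟫ = 0 := by
  rw [image_eq_zero_of_notMem_tsupport hx, gradient_of_notMem_tsupport hx, inner_zero_right,
    mul_zero, sub_zero]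

theorem mul_sub_inner_gradient_le_add {φ ψ : E → ℝ} {x : E} {τ : ℝ} (h : ‖ψ x - φ x‖ ≤ τ)
    (hD : ‖fderiv ℝ ψ x - fderiv ℝ φ x‖ ≤ τ) (g : ℝ) (ξ : E) :
    g * ψ x - ⟪ξ, gradient ψ x⟫ ≤ (g * φ x - ⟪ξ, gradient φ x⟫) + τ * (‖g‖ + ‖ξ‖) := by
  have hzeroth : g * (ψ x - φ x) ≤ ‖g‖ * τ :=
    (Real.le_norm_self _).trans ((norm_mul_le _ _).trans (by gcongr))
  have hfirst : -⟪ξ, gradient ψ x - gradient φ x⟫ ≤ ‖ξ‖ * τ := by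
    refine (neg_le_abs _).trans ((abs_real_inner_le_norm _ _).trans ?_)
    gcongr
    rwa [norm_gradient_sub]
  rw [inner_sub_right] at hfirst
  linarith

end Gradient

theorem fderiv_convolution_lsmul {E F : Type*} [NormedAddCommGroup E] [NormedSpace ℝ E]
    [MeasurableSpace E] [BorelSpace E] [NormedAddCommGroup F] [NormedSpace ℝ F] {μ : Measure E}
    [SFinite μ] [μ.IsAddLeftInvariant] {g : E → ℝ} {φ : E → F} (hg : LocallyIntegrable g μ)
    (hφc : HasCompactSupport φ) (hφ : ContDiff ℝ 1 φ) (x : E) :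
    fderiv ℝ (convolution g φ (ContinuousLinearMap.lsmul ℝ ℝ) μ) x =
      convolution g (fderiv ℝ φ) (ContinuousLinearMap.lsmul ℝ ℝ) μ x := by
  have hprecompR : (ContinuousLinearMap.lsmul ℝ ℝ : ℝ →L[ℝ] F →L[ℝ] F).precompR E =
      ContinuousLinearMap.lsmul ℝ ℝ := by
    ext
    simp
  rw [← hprecompR]
  exact (hφc.hasFDerivAt_convolution_right _ hg hφ x).fderiv

section Mollification

variable {E : Type*} [NormedAddCommGroup E] [NormedSpace ℝ E] [FiniteDimensional ℝ E]

theorem exists_contDiff_tsupport_subset_cthickening_near {φ : E → ℝ} (hφ : ContDiff ℝ 1 φ)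
    (hφc : HasCompactSupport φ) (hφ₀ : ∀ x, 0 ≤ φ x) {τ d : ℝ} (hτ : 0 < τ) (hd : 0 < d) :
    ∃ ψ : E → ℝ, ContDiff ℝ (⊤ : ℕ∞) ψ ∧ tsupport ψ ⊆ cthickening d (tsupport φ) ∧
      (∀ x, 0 ≤ ψ x) ∧ (∀ x, ‖ψ x - φ x‖ ≤ τ) ∧ ∀ x, ‖fderiv ℝ ψ x - fderiv ℝ φ x‖ ≤ τ := by
  borelize E
  let μ : Measure E := Measure.addHaar
  have hDφ : Continuous (fderiv ℝ φ) := hφ.continuous_fderiv one_ne_zero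
  obtain ⟨d₁, hd₁, hnear⟩ := Metric.uniformContinuous_iff.1
    (hφc.uniformContinuous_of_continuous hφ.continuous) τ hτ
  obtain ⟨d₂, hd₂, hDnear⟩ := Metric.uniformContinuous_iff.1
    ((hφc.fderiv ℝ).uniformContinuous_of_continuous hDφ) τ hτ
  let R := min d (min d₁ d₂)
  have hR : 0 < R := by positivity
  have hRd₁ : R ≤ d₁ := (min_le_right _ _).trans (min_le_left _ _)
  have hRd₂ : R ≤ d₂ := (min_le_right _ _).trans (min_le_right _ _)
  let η : ContDiffBump (0 : E) := ⟨R / 2, R, half_pos hR, half_lt_self hR⟩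
  let ψ := convolution (η.normed μ) φ (ContinuousLinearMap.lsmul ℝ ℝ) μ
  refine ⟨ψ, η.hasCompactSupport_normed.contDiff_convolution_left _ η.contDiff_normed
    hφ.continuous.locallyIntegrable, ?_, fun x => ?_, fun x => ?_, fun x => ?_⟩
  · have hsupport : Function.support ψ ⊆ cthickening R (tsupport φ) := by
      refine (support_convolution_subset _).trans ?_
      rw [η.support_normed_eq, ball_add_zero]
      exact (thickening_subset_of_subset R (subset_tsupport φ)).trans
        (thickening_subset_cthickening R _)
    exact (closure_minimal hsupport isClosed_cthickening).trans
      (cthickening_mono (min_le_left _ _) _)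
  · exact integral_nonneg fun y => mul_nonneg (η.nonneg_normed y) (hφ₀ _)
  · rw [← dist_eq_norm]
    exact η.dist_normed_convolution_le hφ.continuous.aestronglyMeasurable
      fun y hy => (hnear ((mem_ball.1 hy).trans_le hRd₁)).le
  · rw [fderiv_convolution_lsmul η.continuous_normed.locallyIntegrable hφc hφ, ← dist_eq_norm]
    exact η.dist_normed_convolution_le hDφ.aestronglyMeasurable
      fun y hy => (hDnear ((mem_ball.1 hy).trans_le hRd₂)).le

end Mollification

theorem setIntegral_le_mul_measureReal_of_ae_le {X : Type*} [MeasurableSpace X] {μ : Measure X}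
    {s : Set X} {f g : X → ℝ} {Q c : ℝ} (hs : μ s ≠ ⊤) (hf : IntegrableOn f s μ)
    (hg : IntegrableOn g s μ) (hQ : 0 ≤ Q) (hg₀ : 0 ≤ ∫ x in s, g x ∂μ)
    (hle : ∀ᵐ x ∂μ.restrict s, f x ≤ c - Q * g x) :
    ∫ x in s, f x ∂μ ≤ c * μ.real s := by
  have hc : IntegrableOn (fun _ => c) s μ := integrableOn_const hs
  calc ∫ x in s, f x ∂μ ≤ ∫ x in s, (c - Q * g x) ∂μ :=
        integral_mono_ae hf (hc.sub (hg.const_mul Q)) hle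
    _ = c * μ.real s - Q * ∫ x in s, g x ∂μ := by
        rw [integral_sub hc (hg.const_mul Q), integral_const_mul, setIntegral_const, smul_eq_mul,
          mul_comm c]
    _ ≤ c * μ.real s := sub_le_self _ (mul_nonneg hQ hg₀)

section WeakInequality

variable {E : Type*} [NormedAddCommGroup E] [InnerProductSpace ℝ E] [FiniteDimensional ℝ E]
  [MeasurableSpace E] [BorelSpace E] {μ : Measure E}

theorem integrableOn_inner_of_continuous {F H : E → E} {K : Set E} (hK : IsCompact K)
    (hF : IntegrableOn F K μ) (hH : Continuous H) :
    IntegrableOn (fun x => ⟪F x, H x⟫) K μ := by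
  obtain ⟨C, hC⟩ := hK.exists_bound_of_continuousOn hH.continuousOn
  refine Integrable.mono' (hF.norm.mul_const C)
    (hF.aestronglyMeasurable.inner hH.aestronglyMeasurable) ?_
  filter_upwards [ae_restrict_mem hK.measurableSet] with x hx
  exact (norm_inner_le_norm _ _).trans (by gcongr; exact hC x hx)

theorem integrableOn_mul_sub_inner_gradient {F : E → E} {G φ : E → ℝ} {K : Set E}
    (hK : IsCompact K) (hF : IntegrableOn F K μ) (hG : IntegrableOn G K μ)
    (hφ : ContDiff ℝ 1 φ) :
    IntegrableOn (fun x => G x * φ x - ⟪F x, gradient φ x⟫) K μ :=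
  (hG.mul_continuousOn hφ.continuous.continuousOn hK).sub
    (integrableOn_inner_of_continuous hK hF (continuous_gradient hφ))

theorem setIntegral_mul_sub_inner_gradient_nonneg_of_contDiff_one {F : E → E} {G : E → ℝ}
    {U : Set E} (hU : IsOpen U) (hF : LocallyIntegrableOn F U μ) (hG : LocallyIntegrableOn G U μ)
    (hsmooth : ∀ ψ : E → ℝ, ContDiff ℝ (⊤ : ℕ∞) ψ → HasCompactSupport ψ → tsupport ψ ⊆ U →
      (∀ x, 0 ≤ ψ x) → 0 ≤ ∫ x in U, (G x * ψ x - ⟪F x, gradient ψ x⟫) ∂μ)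
    {φ : E → ℝ} (hφ : ContDiff ℝ 1 φ) (hφc : HasCompactSupport φ) (hφU : tsupport φ ⊆ U)
    (hφ₀ : ∀ x, 0 ≤ φ x) :
    0 ≤ ∫ x in U, (G x * φ x - ⟪F x, gradient φ x⟫) ∂μ := by
  obtain ⟨d, hd, hdU⟩ := hφc.isCompact.exists_cthickening_subset_open hU hφU
  set K := cthickening d (tsupport φ)
  have hK : IsCompact K := hφc.isCompact.cthickening
  have hFK := hF.integrableOn_compact_subset hdU hK
  have hGK := hG.integrableOn_compact_subset hdU hK
  have hrestrict {f : E → ℝ} (hf : tsupport f ⊆ K) :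
      ∫ x in U, (G x * f x - ⟪F x, gradient f x⟫) ∂μ =
        ∫ x in K, (G x * f x - ⟪F x, gradient f x⟫) ∂μ :=
    setIntegral_eq_of_subset_of_forall_sdiff_eq_zero hU.measurableSet hdU
      fun x hx => mul_sub_inner_gradient_of_notMem_tsupport (fun hxf => hx.2 (hf hxf)) _ _
  suffices happrox : ∀ τ > 0, -(τ * ∫ x in K, (‖G x‖ + ‖F x‖) ∂μ) ≤
      ∫ x in K, (G x * φ x - ⟪F x, gradient φ x⟫) ∂μ by
    rw [hrestrict (self_subset_cthickening _)]
    have hlim : Tendsto (fun τ : ℝ => -(τ * ∫ x in K, (‖G x‖ + ‖F x‖) ∂μ))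
        (nhdsWithin 0 (Ioi 0)) (nhds 0) :=
      tendsto_nhdsWithin_of_tendsto_nhds (Continuous.tendsto' (by fun_prop) _ _ (by simp))
    exact le_of_tendsto hlim (eventually_mem_nhdsWithin.mono happrox)
  intro τ hτ
  obtain ⟨ψ, hψ, hψK, hψ₀, hψφ, hDψφ⟩ :=
    exists_contDiff_tsupport_subset_cthickening_near hφ hφc hφ₀ hτ hd
  have hψint := hsmooth ψ hψ (hK.of_isClosed_subset (isClosed_tsupport ψ) hψK)
    (hψK.trans hdU) hψ₀
  rw [hrestrict hψK] at hψint
  have hφint := integrableOn_mul_sub_inner_gradient hK hFK hGK hφ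
  have herr := (hGK.norm.add hFK.norm).const_mul τ
  have hle := integral_mono (integrableOn_mul_sub_inner_gradient hK hFK hGK (hψ.of_le (by simp)))
    (hφint.add herr) fun x => mul_sub_inner_gradient_le_add (hψφ x) (hDψφ x) (G x) (F x)
  rw [integral_add' hφint herr, integral_const_mul] at hle
  simp only [Pi.add_apply] at hle
  linarith

end WeakInequality

/-- The set where `v` exceeds the level `k` inside the ball of radius `ρ` about `z`. -/
def superlevel {E : Type*} [PseudoMetricSpace E] (v : E → ℝ) (k : ℝ) (z : E) (ρ : ℝ) : Set E :=
  {x ∈ ball z ρ | k < v x}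

section Superlevel

variable {E : Type*} [PseudoMetricSpace E] {v : E → ℝ} {k k' : ℝ} {z : E} {ρ ρ' : ℝ}

theorem superlevel_subset_superlevel (hk : k ≤ k') (hρ : ρ' ≤ ρ) :
    superlevel v k' z ρ' ⊆ superlevel v k z ρ :=
  fun _ hx => ⟨ball_subset_ball hρ hx.1, hk.trans_lt hx.2⟩

theorem isOpen_superlevel (hv : ContinuousOn v (ball z ρ)) : IsOpen (superlevel v k z ρ) :=
  hv.isOpen_inter_preimage isOpen_ball isOpen_Ioi

theorem measure_superlevel_ne_top [ProperSpace E] [MeasurableSpace E] {μ : Measure E}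
    [IsFiniteMeasureOnCompacts μ] : μ (superlevel v k z ρ) ≠ ⊤ :=
  measure_ne_top_of_subset (fun _ hx => hx.1) measure_ball_lt_top.ne

end Superlevel

section DeGiorgiTest

variable {E : Type*} [NormedAddCommGroup E]

/-- The cutoff `(1 - |x - z|² / ρ²)⁺`, a Lipschitz function vanishing off the ball `B_ρ(z)`. -/
def paraboloidCutoff (z : E) (ρ : ℝ) (x : E) : ℝ := (1 - ‖x - z‖ ^ 2 / ρ ^ 2)⁺

/-- The test function `((v - k)⁺)^p η^p`, where `η` is `paraboloidCutoff z ρ`; since `p > 1` it is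
of class `C¹`. -/
def deGiorgiTest (p : ℝ) (v : E → ℝ) (k : ℝ) (z : E) (ρ : ℝ) (x : E) : ℝ :=
  (v x - k)⁺ ^ p * paraboloidCutoff z ρ x ^ p

variable {p : ℝ} {v : E → ℝ} {k k' : ℝ} {x z : E} {ρ ρ' r : ℝ}

theorem paraboloidCutoff_nonneg : 0 ≤ paraboloidCutoff z ρ x := posPart_nonneg _

theorem paraboloidCutoff_le_one : paraboloidCutoff z ρ x ≤ 1 := by
  rw [paraboloidCutoff, posPart_def]
  exact sup_le (sub_le_self 1 (by positivity)) zero_le_one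

theorem paraboloidCutoff_of_notMem_ball (hρ : 0 < ρ) (hx : x ∉ ball z ρ) :
    paraboloidCutoff z ρ x = 0 := by
  rw [mem_ball, dist_eq_norm, not_lt] at hx
  rw [paraboloidCutoff, posPart_eq_zero, sub_nonpos, one_le_div (by positivity)]
  gcongr

theorem one_sub_div_le_paraboloidCutoff (hρρ' : ρ' ≤ ρ) (hx : x ∈ ball z ρ') :
    1 - ρ' / ρ ≤ paraboloidCutoff z ρ x := by
  rw [mem_ball, dist_eq_norm] at hx
  have hρ' : 0 < ρ' := (norm_nonneg _).trans_lt hx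
  have hρ : 0 < ρ := hρ'.trans_le hρρ'
  have hsq : ‖x - z‖ ^ 2 / ρ ^ 2 ≤ ρ' / ρ :=
    calc ‖x - z‖ ^ 2 / ρ ^ 2 ≤ (ρ' / ρ) ^ 2 := by rw [div_pow]; gcongr
      _ ≤ ρ' / ρ := pow_le_of_le_one (by positivity) ((div_le_one hρ).2 hρρ') two_ne_zero
  exact (sub_le_sub_left hsq 1).trans (le_posPart _)

theorem deGiorgiTest_nonneg : 0 ≤ deGiorgiTest p v k z ρ x :=
  mul_nonneg (Real.rpow_nonneg (posPart_nonneg _) p) (Real.rpow_nonneg paraboloidCutoff_nonneg p)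

theorem deGiorgiTest_of_notMem_superlevel (hp : p ≠ 0) (hρ : 0 < ρ)
    (hx : x ∉ superlevel v k z ρ) : deGiorgiTest p v k z ρ x = 0 := by
  by_cases hxρ : x ∈ ball z ρ
  · have hvk : v x ≤ k := not_lt.1 fun h => hx ⟨hxρ, h⟩
    rw [deGiorgiTest, posPart_of_nonpos (sub_nonpos.2 hvk), Real.zero_rpow hp, zero_mul]
  · rw [deGiorgiTest, paraboloidCutoff_of_notMem_ball hρ hxρ, Real.zero_rpow hp, mul_zero]

theorem tsupport_deGiorgiTest_subset (hp : p ≠ 0) (hρ : 0 < ρ) :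
    tsupport (deGiorgiTest p v k z ρ) ⊆ closedBall z ρ := by
  refine closure_minimal (fun x hx => ?_) isClosed_closedBall
  by_contra hx'
  exact hx (deGiorgiTest_of_notMem_superlevel hp hρ fun h => hx' (ball_subset_closedBall h.1))

theorem hasCompactSupport_deGiorgiTest [ProperSpace E] (hp : p ≠ 0) (hρ : 0 < ρ) :
    HasCompactSupport (deGiorgiTest p v k z ρ) :=
  (isCompact_closedBall z ρ).of_isClosed_subset (isClosed_tsupport _)
    (tsupport_deGiorgiTest_subset hp hρ)

theorem rpow_mul_le_deGiorgiTest (hp : 0 ≤ p) (hρρ' : ρ' ≤ ρ) (hρ : 0 ≤ ρ) (hk : k ≤ k')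
    (hx : x ∈ superlevel v k' z ρ') :
    ((k' - k) * (1 - ρ' / ρ)) ^ p ≤ deGiorgiTest p v k z ρ x := by
  have hcut : 0 ≤ 1 - ρ' / ρ := sub_nonneg.2 (div_le_one_of_le₀ hρρ' hρ)
  rw [deGiorgiTest, Real.mul_rpow (sub_nonneg.2 hk) hcut]
  gcongr
  · exact (sub_le_sub_right hx.2.le k).trans (le_posPart _)
  · exact one_sub_div_le_paraboloidCutoff hρρ' hx.1

variable [InnerProductSpace ℝ E]

theorem contDiff_deGiorgiTest (hp : 1 < p) (hρ : 0 < ρ) (hρr : ρ < r)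
    (hv : ContDiffOn ℝ 1 v (ball z r)) : ContDiff ℝ 1 (deGiorgiTest p v k z ρ) := by
  rw [contDiff_iff_contDiffAt]
  intro x
  by_cases hx : x ∈ ball z r
  · have hvx : ContDiffAt ℝ 1 v x := hv.contDiffAt (isOpen_ball.mem_nhds hx)
    have hquad : ContDiff ℝ 1 fun y : E => 1 - ‖y - z‖ ^ 2 / ρ ^ 2 :=
      contDiff_const.sub (((contDiff_id.sub contDiff_const).norm_sq ℝ).div_const _)
    exact ((contDiff_posPart_rpow hp).contDiffAt.comp x (hvx.sub contDiffAt_const)).mul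
      ((contDiff_posPart_rpow hp).comp hquad).contDiffAt
  · have hx' : x ∈ (closedBall z ρ)ᶜ := fun h => hx (closedBall_subset_ball hρr h)
    refine (contDiffAt_const (c := (0 : ℝ))).congr_of_eventuallyEq ?_
    filter_upwards [isClosed_closedBall.isOpen_compl.mem_nhds hx'] with y hy
    exact deGiorgiTest_of_notMem_superlevel (by linarith) hρ
      fun h => hy (ball_subset_closedBall h.1)

theorem gradient_deGiorgiTest_of_notMem_superlevel [CompleteSpace E] (hp : p ≠ 0) (hρ : 0 < ρ)
    (hx : x ∉ superlevel v k z ρ) : gradient (deGiorgiTest p v k z ρ) x = 0 := by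
  have hmin : IsLocalMin (deGiorgiTest p v k z ρ) x := Eventually.of_forall fun y => by
    rw [deGiorgiTest_of_notMem_superlevel hp hρ hx]
    exact deGiorgiTest_nonneg
  rw [gradient, hmin.fderiv_eq_zero, map_zero]

theorem mul_sub_inner_gradient_deGiorgiTest_of_notMem_superlevel [CompleteSpace E] (hp : p ≠ 0)
    (hρ : 0 < ρ) (hx : x ∉ superlevel v k z ρ) (g : ℝ) (ξ : E) :
    g * deGiorgiTest p v k z ρ x - ⟪ξ, gradient (deGiorgiTest p v k z ρ) x⟫ = 0 := by
  rw [deGiorgiTest_of_notMem_superlevel hp hρ hx,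
    gradient_deGiorgiTest_of_notMem_superlevel hp hρ hx, inner_zero_right, mul_zero, sub_zero]

theorem hasFDerivAt_one_sub_norm_sq_div (z : E) (ρ : ℝ) (x : E) :
    HasFDerivAt (fun y => 1 - ‖y - z‖ ^ 2 / ρ ^ 2) ((-(2 / ρ ^ 2)) • innerSL ℝ (x - z)) x := by
  have := ((((hasFDerivAt_id x).sub_const z).norm_sq).mul_const (ρ ^ 2)⁻¹).const_sub 1
  refine this.congr_fderiv ?_
  ext y
  simp only [id_eq, map_sub, ContinuousLinearMap.comp_id, neg_apply, smul_apply, sub_apply,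
    coe_innerSL_apply, nsmul_eq_mul, Nat.cast_ofNat, smul_eq_mul, neg_smul]
  ring

theorem gradient_deGiorgiTest [CompleteSpace E] (hp : 1 < p) (hv : DifferentiableAt ℝ v x) :
    gradient (deGiorgiTest p v k z ρ) x = (p * (v x - k)⁺ ^ (p - 1)) •
      (paraboloidCutoff z ρ x ^ p • gradient v x +
        paraboloidCutoff z ρ x ^ (p - 1) • ((v x - k)⁺ • (-(2 / ρ ^ 2)) • (x - z))) := by
  have hlevel : HasFDerivAt (fun y => (v y - k)⁺ ^ p)
      ((p * (v x - k)⁺ ^ (p - 1)) • fderiv ℝ v x) x :=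
    (hasDerivAt_posPart_rpow hp (v x - k)).comp_hasFDerivAt (f := fun y => v y - k) x
      (hv.hasFDerivAt.sub_const k)
  have hcut : HasFDerivAt (fun y => paraboloidCutoff z ρ y ^ p)
      ((p * paraboloidCutoff z ρ x ^ (p - 1)) • (-(2 / ρ ^ 2)) • innerSL ℝ (x - z)) x :=
    (hasDerivAt_posPart_rpow hp (1 - ‖x - z‖ ^ 2 / ρ ^ 2)).comp_hasFDerivAt
      (f := fun y => 1 - ‖y - z‖ ^ 2 / ρ ^ 2) x (hasFDerivAt_one_sub_norm_sq_div z ρ x)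
  have hw : (v x - k)⁺ ^ p = (v x - k)⁺ ^ (p - 1) * (v x - k)⁺ := by
    rw [← Real.rpow_add_one' (posPart_nonneg _) (by linarith), sub_add_cancel]
  refine HasGradientAt.gradient (hasGradientAt_iff_hasFDerivAt.2 ?_)
  refine (hlevel.mul hcut).congr_fderiv ?_
  ext y
  simp only [hw, add_apply, smul_apply, innerSL_apply_apply,
    InnerProductSpace.toDual_apply_apply, inner_add_left, real_inner_smul_left,
    inner_gradient_left, smul_eq_mul]
  ring

end DeGiorgiTest

/-- `S` is a constant for the weak-type form of the Gagliardo–Nirenberg–Sobolev inequality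
`‖u‖_{(d+1)/d} ≤ S ‖Du‖₁` on a space of dimension `d + 1`: if `|u| ≥ c` on `s`, then
`c^(d+1) μ(s)^d ≤ (S ∫ |Du|)^(d+1)`. Raising to the power `d + 1` keeps all exponents natural. -/
def IsWeakSobolevConst {E : Type*} (F : Type*) [NormedAddCommGroup E] [NormedSpace ℝ E]
    [MeasurableSpace E] [NormedAddCommGroup F] [NormedSpace ℝ F] (μ : Measure E) (d : ℕ)
    (S : ℝ) : Prop :=
  ∀ u : E → F, ContDiff ℝ 1 u → HasCompactSupport u → ∀ c : ℝ, 0 ≤ c →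
    ∀ s : Set E, (∀ x ∈ s, c ≤ ‖u x‖) →
      c ^ (d + 1) * μ.real s ^ d ≤ (S * ∫ x, ‖fderiv ℝ u x‖ ∂μ) ^ (d + 1)

section WeakTypeSobolev

variable {E : Type*} [NormedAddCommGroup E] [NormedSpace ℝ E] [FiniteDimensional ℝ E]
  [MeasurableSpace E] [BorelSpace E] (μ : Measure E) [μ.IsAddHaarMeasure]

theorem rpow_mul_measureReal_le_rpow_integral_norm_fderiv {F : Type*} [NormedAddCommGroup F]
    [NormedSpace ℝ F] {q : ℝ} (hq : Real.HolderConjugate (Module.finrank ℝ E) q) {u : E → F}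
    (hu : ContDiff ℝ 1 u) (huc : HasCompactSupport u) {c : ℝ} (hc : 0 ≤ c) {s : Set E}
    (hs : ∀ x ∈ s, c ≤ ‖u x‖) :
    c ^ q * μ.real s ≤
      lintegralPowLePowLIntegralFDerivConst μ q * (∫ x, ‖fderiv ℝ u x‖ ∂μ) ^ q := by
  have hq₀ : 0 < q := hq.symm.pos
  set S := lintegralPowLePowLIntegralFDerivConst μ q
  set I := ∫ x, ‖fderiv ℝ u x‖ ∂μ
  have hI₀ : 0 ≤ I := integral_nonneg fun x => norm_nonneg _
  have hI : ∫⁻ x, ‖fderiv ℝ u x‖ₑ ∂μ = ENNReal.ofReal I :=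
    (ofReal_integral_norm_eq_lintegral_enorm ((hu.continuous_fderiv one_ne_zero)
      |>.integrable_of_hasCompactSupport (huc.fderiv ℝ))).symm
  have hsuper : s ⊆ {x | ENNReal.ofReal c ^ q ≤ ‖u x‖ₑ ^ q} := by
    intro x hx
    rw [Set.mem_ofPred_eq, ← ofReal_norm]
    gcongr
    exact hs x hx
  have hweak : ENNReal.ofReal c ^ q * μ s ≤ S * ENNReal.ofReal I ^ q := by
    calc ENNReal.ofReal c ^ q * μ s ≤
          ENNReal.ofReal c ^ q * μ {x | ENNReal.ofReal c ^ q ≤ ‖u x‖ₑ ^ q} := by gcongr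
      _ ≤ ∫⁻ x, ‖u x‖ₑ ^ q ∂μ :=
          mul_meas_ge_le_lintegral₀ (hu.continuous.enorm.measurable.pow_const q).aemeasurable _
      _ ≤ S * ENNReal.ofReal I ^ q := hI ▸ lintegral_pow_le_pow_lintegral_fderiv μ hu huc hq
  have hreal := ENNReal.toReal_mono (by finiteness) hweak
  rwa [ENNReal.toReal_mul, ENNReal.toReal_mul, ← ENNReal.toReal_rpow, ← ENNReal.toReal_rpow,
    ENNReal.toReal_ofReal hc, ENNReal.toReal_ofReal hI₀] at hreal

theorem exists_isWeakSobolevConst (F : Type*) [NormedAddCommGroup F] [NormedSpace ℝ F]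
    {d : ℕ} (hd : d ≠ 0) (hE : Module.finrank ℝ E = d + 1) :
    ∃ S : ℝ, 0 < S ∧ IsWeakSobolevConst F μ d S := by
  have hd₀ : (0 : ℝ) < d := by positivity
  set q : ℝ := (d + 1) / d with hq
  have hconj : Real.HolderConjugate (Module.finrank ℝ E) q := by
    rw [hE, Nat.cast_add_one, hq, Real.holderConjugate_iff]
    exact ⟨by linarith, by field_simp; ring⟩
  have hpow {t : ℝ} (ht : 0 ≤ t) : (t ^ q) ^ d = t ^ (d + 1) := by
    rw [← Real.rpow_mul_natCast ht, hq, div_mul_cancel₀ _ hd₀.ne', ← Nat.cast_add_one,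
      Real.rpow_natCast]
  set S := lintegralPowLePowLIntegralFDerivConst μ q
  refine ⟨S + 1, by positivity, fun u hu huc c hc s hs => ?_⟩
  have hweak := rpow_mul_measureReal_le_rpow_integral_norm_fderiv μ hconj hu huc hc hs
  have hI₀ : 0 ≤ ∫ x, ‖fderiv ℝ u x‖ ∂μ := integral_nonneg fun x => norm_nonneg _
  have hS : (S : ℝ) ^ d ≤ (S + 1) ^ (d + 1) :=
    (pow_le_pow_left₀ S.coe_nonneg (by linarith) d).trans
      (pow_le_pow_right₀ (by linarith [S.coe_nonneg]) d.le_succ)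
  calc c ^ (d + 1) * μ.real s ^ d = (c ^ q * μ.real s) ^ d := by rw [mul_pow, hpow hc]
    _ ≤ (S * (∫ x, ‖fderiv ℝ u x‖ ∂μ) ^ q) ^ d := by gcongr
    _ = S ^ d * (∫ x, ‖fderiv ℝ u x‖ ∂μ) ^ (d + 1) := by rw [mul_pow, hpow hI₀]
    _ ≤ (S + 1) ^ (d + 1) * (∫ x, ‖fderiv ℝ u x‖ ∂μ) ^ (d + 1) := by gcongr
    _ = ((S + 1) * ∫ x, ‖fderiv ℝ u x‖ ∂μ) ^ (d + 1) := (mul_pow _ _ _).symm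

end WeakTypeSobolev

theorem norm_smul_neg_two_div_sq_smul_le {E : Type*} [NormedAddCommGroup E] [NormedSpace ℝ E]
    {w M ρ : ℝ} {y : E} (hw₀ : 0 ≤ w) (hw : w ≤ M) (hρ : 0 < ρ) (hy : ‖y‖ ≤ ρ) :
    ‖w • (-(2 / ρ ^ 2)) • y‖ ≤ 2 * M / ρ := by
  rw [norm_smul, norm_smul, norm_neg, Real.norm_of_nonneg hw₀,
    Real.norm_of_nonneg (by positivity)]
  calc w * (2 / ρ ^ 2 * ‖y‖) ≤ M * (2 / ρ ^ 2 * ρ) := by gcongr; exact hw₀.trans hw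
    _ = 2 * M / ρ := by field_simp

/-- The constant in `IsBoundedSubsolution.integral_norm_fderiv_deGiorgiTest_le`. -/
def caccioppoliConst (p C₁ C₂ : ℝ) : ℝ := 2 * p * (4 + (4 * C₂ / C₁) ^ p)

theorem caccioppoliConst_pos {p C₁ C₂ : ℝ} (hp : 0 < p) (hC₁ : 0 < C₁) (hC₂ : 0 < C₂) :
    0 < caccioppoliConst p C₁ C₂ := by
  rw [caccioppoliConst]
  positivity

/-- A `C¹` solution `v ≤ M` of `div A(x,Dv) + b(x)|Dv|^α ≥ 0` in `B_r(z)` whose lower order term is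
dominated by the coercivity of `A` at scale `r`: almost everywhere in the ball,
`r^(p-α) M^(α-p+1) b ≤ C₁/2`. -/
structure IsBoundedSubsolution {n : ℕ} (A : Euc n → Euc n → Euc n) (b : Euc n → ℝ)
    (p α C₁ C₂ r M : ℝ) (z : Euc n) (v : Euc n → ℝ) : Prop where
  structCond : StructCond A p C₁ C₂
  measurable : Measurable b
  nonneg : ∀ x, 0 ≤ b x
  locBdd : LocBdd b
  contDiffOn : ContDiffOn ℝ 1 v (ball z r)
  le : ∀ x ∈ ball z r, v x ≤ M
  isWeakSol : IsWeakSol A b α (fun _ => 0) (ball z r) v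
  rescaled_le : ∀ᵐ x ∂volume.restrict (ball z r), r ^ (p - α) * M ^ (α - p + 1) * b x ≤ C₁ / 2

namespace IsBoundedSubsolution

variable {n : ℕ} {A : Euc n → Euc n → Euc n} {b : Euc n → ℝ} {p α C₁ C₂ r M : ℝ} {z : Euc n}
  {v : Euc n → ℝ}

theorem measurable_flux (h : IsBoundedSubsolution A b p α C₁ C₂ r M z v) :
    Measurable fun x => A x (gradient v x) :=
  h.structCond.1.comp (measurable_id.prodMk (measurable_gradient v))

theorem exists_norm_gradient_le (h : IsBoundedSubsolution A b p α C₁ C₂ r M z v) {K : Set (Euc n)}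
    (hK : IsCompact K) (hKr : K ⊆ ball z r) : ∃ X, ∀ x ∈ K, ‖gradient v x‖ ≤ X :=
  hK.exists_bound_of_continuousOn ((continuousOn_gradient isOpen_ball h.contDiffOn).mono hKr)

theorem locallyIntegrableOn_flux (h : IsBoundedSubsolution A b p α C₁ C₂ r M z v) (hp : 1 ≤ p)
    (hC₂ : 0 ≤ C₂) : LocallyIntegrableOn (fun x => A x (gradient v x)) (ball z r) := by
  rw [locallyIntegrableOn_iff isOpen_ball.isLocallyClosed]
  intro K hKr hK
  obtain ⟨X, hX⟩ := h.exists_norm_gradient_le hK hKr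
  refine Measure.integrableOn_of_bounded (M := C₂ * X ^ (p - 1)) hK.measure_lt_top.ne
    h.measurable_flux.aestronglyMeasurable ?_
  filter_upwards [ae_restrict_mem hK.measurableSet] with x hx
  refine (h.structCond.2 x _).2.trans ?_
  gcongr
  exact hX x hx

theorem locallyIntegrableOn_lowerOrder (h : IsBoundedSubsolution A b p α C₁ C₂ r M z v)
    (hα : 0 ≤ α) : LocallyIntegrableOn (fun x => b x * ‖gradient v x‖ ^ α) (ball z r) := by
  rw [locallyIntegrableOn_iff isOpen_ball.isLocallyClosed]
  intro K hKr hK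
  obtain ⟨X, hX⟩ := h.exists_norm_gradient_le hK hKr
  obtain ⟨B, hB⟩ := h.locBdd K hK
  refine Measure.integrableOn_of_bounded (M := B * X ^ α) hK.measure_lt_top.ne
    (h.measurable.mul
      ((measurable_gradient v).norm.pow_const α)).aestronglyMeasurable ?_
  filter_upwards [ae_restrict_mem hK.measurableSet] with x hx
  have hbx := h.nonneg x
  rw [Real.norm_of_nonneg (by positivity)]
  gcongr
  exacts [hbx.trans (hB x hx), hB x hx, hX x hx]

theorem integrableOn_of_contDiff_one (h : IsBoundedSubsolution A b p α C₁ C₂ r M z v)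
    (hp : 1 ≤ p) (hC₂ : 0 ≤ C₂) (hα : 0 ≤ α) {φ : Euc n → ℝ} (hφ : ContDiff ℝ 1 φ)
    (hφc : HasCompactSupport φ) (hφr : tsupport φ ⊆ ball z r) :
    IntegrableOn (fun x => b x * ‖gradient v x‖ ^ α * φ x -
      ⟪A x (gradient v x), gradient φ x⟫) (ball z r) :=
  (integrableOn_mul_sub_inner_gradient hφc
    ((h.locallyIntegrableOn_flux hp hC₂).integrableOn_compact_subset hφr hφc)
    ((h.locallyIntegrableOn_lowerOrder hα).integrableOn_compact_subset hφr hφc)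
    hφ).of_forall_sdiff_eq_zero measurableSet_ball fun _ hx =>
      mul_sub_inner_gradient_of_notMem_tsupport hx.2 _ _

theorem setIntegral_nonneg_of_contDiff_one (h : IsBoundedSubsolution A b p α C₁ C₂ r M z v)
    (hp : 1 ≤ p) (hC₂ : 0 ≤ C₂) (hα : 0 ≤ α) {φ : Euc n → ℝ} (hφ : ContDiff ℝ 1 φ)
    (hφc : HasCompactSupport φ) (hφr : tsupport φ ⊆ ball z r) (hφ₀ : ∀ x, 0 ≤ φ x) :
    0 ≤ ∫ x in ball z r,
      (b x * ‖gradient v x‖ ^ α * φ x - ⟪A x (gradient v x), gradient φ x⟫) := by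
  have hF := h.locallyIntegrableOn_flux hp hC₂
  have hG := h.locallyIntegrableOn_lowerOrder hα
  refine setIntegral_mul_sub_inner_gradient_nonneg_of_contDiff_one isOpen_ball hF hG
    (fun ψ hψ hψc hψr hψ₀ => ?_) hφ hφc hφr hφ₀
  have hGψ : IntegrableOn (fun x => b x * ‖gradient v x‖ ^ α * ψ x) (ball z r) :=
    ((hG.integrableOn_compact_subset hψr hψc).mul_continuousOn hψ.continuous.continuousOn
      hψc).of_forall_sdiff_eq_zero measurableSet_ball fun x hx => by
        rw [image_eq_zero_of_notMem_tsupport hx.2, mul_zero]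
  have hFψ : IntegrableOn (fun x => ⟪A x (gradient v x), gradient ψ x⟫) (ball z r) :=
    (integrableOn_inner_of_continuous hψc (hF.integrableOn_compact_subset hψr hψc)
      (continuous_gradient (hψ.of_le (by simp)))).of_forall_sdiff_eq_zero measurableSet_ball
      fun x hx => by rw [gradient_of_notMem_tsupport hx.2, inner_zero_right]
  have hweak := h.isWeakSol ψ hψ hψc hψr hψ₀
  simp only [zero_mul, integral_zero] at hweak
  rw [integral_sub hGψ hFψ]
  linarith

theorem lowerOrder_mul_sub_le (h : IsBoundedSubsolution A b p α C₁ C₂ r M z v) (hα₀ : 0 ≤ α)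
    (hα : α ≤ p) (hC₁ : 0 ≤ C₁) (hM : 0 < M) {k ρ : ℝ} (hk : 0 ≤ k) (hρ : 0 < ρ) (hρr : ρ ≤ r)
    {x : Euc n} (hx : x ∈ ball z r) (hbx : r ^ (p - α) * M ^ (α - p + 1) * b x ≤ C₁ / 2) :
    b x * ‖gradient v x‖ ^ α * (v x - k) ≤
      C₁ / 2 * (‖gradient v x‖ ^ p + (2 * M / ρ) ^ p) := by
  have hr : 0 < r := hρ.trans_le hρr
  have hb := h.nonneg x
  calc b x * ‖gradient v x‖ ^ α * (v x - k) ≤ b x * ‖gradient v x‖ ^ α * M := by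
        gcongr
        exact (sub_le_self _ hk).trans (h.le x hx)
    _ ≤ C₁ / 2 * (‖gradient v x‖ ^ p + (M / r) ^ p) :=
        mul_rpow_mul_le_of_rescaled_le hα₀ hα (by positivity) hr hM (norm_nonneg _) hbx
    _ ≤ C₁ / 2 * (‖gradient v x‖ ^ p + (2 * M / ρ) ^ p) := by
        have : M ≤ 2 * M := by linarith
        have := hα₀.trans hα
        gcongr

theorem norm_gradient_deGiorgiTest_le (h : IsBoundedSubsolution A b p α C₁ C₂ r M z v)
    (hp : 1 < p) (hα₀ : 0 ≤ α) (hα : α ≤ p) (hC₁ : 0 < C₁) (hC₂ : 0 < C₂) (hM : 0 < M) {k ρ : ℝ}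
    (hk : 0 ≤ k) (hρ : 0 < ρ) (hρr : ρ ≤ r) {x : Euc n} (hx : x ∈ superlevel v k z ρ)
    (hbx : r ^ (p - α) * M ^ (α - p + 1) * b x ≤ C₁ / 2) :
    ‖gradient (deGiorgiTest p v k z ρ) x‖ ≤
      4 / C₁ * (2 * M / ρ) ^ (1 - p) *
          (⟪A x (gradient v x), gradient (deGiorgiTest p v k z ρ) x⟫ -
            b x * ‖gradient v x‖ ^ α * deGiorgiTest p v k z ρ x) +
        caccioppoliConst p C₁ C₂ * M ^ p / ρ := by
  have hvk : 0 ≤ v x - k := sub_nonneg.2 hx.2.le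
  have hxr : x ∈ ball z r := ball_subset_ball hρr hx.1
  have hwM : v x - k ≤ M := (sub_le_self _ hk).trans (h.le x hxr)
  have hv : DifferentiableAt ℝ v x :=
    (h.contDiffOn.contDiffAt (isOpen_ball.mem_nhds hxr)).differentiableAt one_ne_zero
  have hxρ : ‖x - z‖ ≤ ρ := (mem_ball_iff_norm.1 hx.1).le
  have hcutoff := norm_cutoff_smul_add_le hp hC₁ hC₂ (by positivity)
    (paraboloidCutoff_nonneg (z := z) (ρ := ρ) (x := x)) paraboloidCutoff_le_one
    (h.structCond.2 x (gradient v x)).1 (h.structCond.2 x _).2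
    (norm_smul_neg_two_div_sq_smul_le hvk hwM hρ hxρ)
    (h.lowerOrder_mul_sub_le hα₀ hα hC₁.le hM hk hρ hρr hxr hbx)
  have hb := h.nonneg x
  have hη : 0 ≤ paraboloidCutoff z ρ x := paraboloidCutoff_nonneg
  rw [gradient_deGiorgiTest hp hv, deGiorgiTest, posPart_of_nonneg hvk, norm_smul,
    Real.norm_of_nonneg (by positivity), real_inner_smul_right]
  exact mul_rpow_sub_one_mul_le_of_le hp hvk hwM hρ (by positivity) (by positivity)
    (by positivity) (by positivity) hcutoff

theorem integral_norm_fderiv_deGiorgiTest_le (h : IsBoundedSubsolution A b p α C₁ C₂ r M z v)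
    (hp : 1 < p) (hα₀ : 0 ≤ α) (hα : α ≤ p) (hC₁ : 0 < C₁) (hC₂ : 0 < C₂) (hM : 0 < M) {k ρ : ℝ}
    (hk : 0 ≤ k) (hρ : 0 < ρ) (hρr : ρ < r) :
    ∫ x, ‖fderiv ℝ (deGiorgiTest p v k z ρ) x‖ ≤
      caccioppoliConst p C₁ C₂ * M ^ p / ρ * volume.real (superlevel v k z ρ) := by
  have hp₀ : p ≠ 0 := by positivity
  set φ := deGiorgiTest p v k z ρ
  set E := superlevel v k z ρ
  have hE : MeasurableSet E := (isOpen_superlevel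
    (h.contDiffOn.continuousOn.mono (ball_subset_ball hρr.le))).measurableSet
  have hEr : E ⊆ ball z r := fun x hx => ball_subset_ball hρr.le hx.1
  have hφ : ContDiff ℝ 1 φ := contDiff_deGiorgiTest hp hρ hρr h.contDiffOn
  have hφr : tsupport φ ⊆ ball z r :=
    (tsupport_deGiorgiTest_subset hp₀ hρ).trans (closedBall_subset_ball hρr)
  have hφc : HasCompactSupport φ := hasCompactSupport_deGiorgiTest hp₀ hρ
  have hDφ : IntegrableOn (fun x => ‖gradient φ x‖) E :=
    ((continuous_gradient hφ).norm.integrable_of_hasCompactSupport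
      (hasCompactSupport_gradient hφc).norm).integrableOn
  set g : Euc n → ℝ := fun x => b x * ‖gradient v x‖ ^ α * φ x -
    ⟪A x (gradient v x), gradient φ x⟫
  have hg : IntegrableOn g E :=
    (h.integrableOn_of_contDiff_one hp.le hC₂.le hα₀ hφ hφc hφr).mono_set hEr
  have hgE : 0 ≤ ∫ x in E, g x := by
    rw [← setIntegral_eq_of_subset_of_forall_sdiff_eq_zero measurableSet_ball hEr fun x hx =>
      mul_sub_inner_gradient_deGiorgiTest_of_notMem_superlevel hp₀ hρ hx.2 _ _]
    exact h.setIntegral_nonneg_of_contDiff_one hp.le hC₂.le hα₀ hφ hφc hφr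
      fun x => deGiorgiTest_nonneg
  have hDφ_eq : ∫ x, ‖fderiv ℝ φ x‖ = ∫ x in E, ‖gradient φ x‖ := by
    simp_rw [← norm_gradient]
    exact (setIntegral_eq_integral_of_forall_compl_eq_zero fun x hx => by
      rw [gradient_deGiorgiTest_of_notMem_superlevel hp₀ hρ hx, norm_zero]).symm
  rw [hDφ_eq]
  refine setIntegral_le_mul_measureReal_of_ae_le (Q := 4 / C₁ * (2 * M / ρ) ^ (1 - p))
    measure_superlevel_ne_top hDφ hg (by positivity) hgE ?_
  filter_upwards [ae_restrict_mem hE, ae_restrict_of_ae_restrict_of_subset hEr h.rescaled_le]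
    with x hxE hbx
  refine (h.norm_gradient_deGiorgiTest_le hp hα₀ hα hC₁ hC₂ hM hk hρ hρr.le hxE hbx).trans_eq ?_
  ring

end IsBoundedSubsolution

/-- The density of `{v > 0}` below which the De Giorgi iteration converges: it equals
`1 / (C^(d+1) L^((d+1)d))`, where `C = 8 S K (8/ε)^p`, `K` is `caccioppoliConst`, and `L = 4^p`
are the constants of `IsBoundedSubsolution.normalized_measureReal_superlevel_pow_le`. -/
def deGiorgiThreshold (d : ℕ) (S p C₁ C₂ ε : ℝ) : ℝ :=
  1 / ((8 * S * caccioppoliConst p C₁ C₂ * (8 / ε) ^ p) ^ (d + 1) * (4 ^ p) ^ ((d + 1) * d))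

theorem deGiorgiThreshold_pos (d : ℕ) {S p C₁ C₂ ε : ℝ} (hS : 0 < S) (hp : 0 < p) (hC₁ : 0 < C₁)
    (hC₂ : 0 < C₂) (hε : 0 < ε) : 0 < deGiorgiThreshold d S p C₁ C₂ ε := by
  have hcacc := caccioppoliConst_pos hp hC₁ hC₂
  rw [deGiorgiThreshold]
  positivity

/-- The levels `m (1 - 2⁻ʲ)`, increasing from `0` to `m`, of the De Giorgi iteration. -/
def deGiorgiLevel (m : ℝ) (j : ℕ) : ℝ := m * (1 - (1 / 2) ^ j)

/-- The radii `(r/8) (1 + 2⁻ʲ)`, decreasing from `r/4` to `r/8`, of the De Giorgi iteration. -/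
def deGiorgiRadius (r : ℝ) (j : ℕ) : ℝ := r / 8 * (1 + (1 / 2) ^ j)

section Levels

variable {m r : ℝ} (j : ℕ)

theorem deGiorgiLevel_nonneg (hm : 0 ≤ m) : 0 ≤ deGiorgiLevel m j :=
  mul_nonneg hm (sub_nonneg.2 (pow_le_one₀ (by norm_num) (by norm_num)))

theorem deGiorgiLevel_le (hm : 0 ≤ m) : deGiorgiLevel m j ≤ m :=
  mul_le_of_le_one_right hm (sub_le_self 1 (by positivity))

theorem deGiorgiLevel_le_succ (hm : 0 ≤ m) : deGiorgiLevel m j ≤ deGiorgiLevel m (j + 1) := by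
  rw [deGiorgiLevel, deGiorgiLevel, pow_succ]
  gcongr
  exact mul_le_of_le_one_right (by positivity) (by norm_num)

theorem div_eight_le_deGiorgiRadius (hr : 0 ≤ r) : r / 8 ≤ deGiorgiRadius r j :=
  le_mul_of_one_le_right (by positivity) (le_add_of_nonneg_right (by positivity))

theorem deGiorgiRadius_pos (hr : 0 < r) : 0 < deGiorgiRadius r j :=
  (by positivity : 0 < r / 8).trans_le (div_eight_le_deGiorgiRadius j hr.le)

theorem deGiorgiRadius_le_div_four (hr : 0 ≤ r) : deGiorgiRadius r j ≤ r / 4 := by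
  have hpow : (1 / 2 : ℝ) ^ j ≤ 1 := pow_le_one₀ (by norm_num) (by norm_num)
  calc r / 8 * (1 + (1 / 2) ^ j) ≤ r / 8 * (1 + 1) := by gcongr
    _ = r / 4 := by ring

theorem deGiorgiRadius_succ_le (hr : 0 ≤ r) : deGiorgiRadius r (j + 1) ≤ deGiorgiRadius r j := by
  rw [deGiorgiRadius, deGiorgiRadius, pow_succ]
  gcongr
  exact mul_le_of_le_one_right (by positivity) (by norm_num)

theorem le_deGiorgiLevel_sub_mul_one_sub_deGiorgiRadius_div (hm : 0 ≤ m) (hr : 0 < r) :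
    m / 8 * (1 / 4) ^ j ≤ (deGiorgiLevel m (j + 1) - deGiorgiLevel m j) *
      (1 - deGiorgiRadius r (j + 1) / deGiorgiRadius r j) := by
  have hlevel : deGiorgiLevel m (j + 1) - deGiorgiLevel m j = m / 2 * (1 / 2) ^ j := by
    rw [deGiorgiLevel, deGiorgiLevel]
    ring
  have hradius : (1 / 2) ^ j / 4 ≤ 1 - deGiorgiRadius r (j + 1) / deGiorgiRadius r j := by
    have hgap : deGiorgiRadius r j - deGiorgiRadius r (j + 1) = (1 / 2) ^ j / 4 * (r / 4) := by
      rw [deGiorgiRadius, deGiorgiRadius]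
      ring
    have hpos := deGiorgiRadius_pos j hr
    rw [one_sub_div hpos.ne', le_div_iff₀ hpos, hgap]
    gcongr
    exact deGiorgiRadius_le_div_four j hr.le
  calc m / 8 * (1 / 4) ^ j = m / 2 * (1 / 2) ^ j * ((1 / 2) ^ j / 4) := by
        rw [show (1 / 4 : ℝ) = 1 / 2 * (1 / 2) by norm_num, mul_pow]
        ring
    _ ≤ _ := by rw [hlevel]; gcongr

end Levels

theorem div_pow_le_of_pow_mul_pow_le {d : ℕ} {B c r y y' : ℝ} (hc : 0 < c) (hr : 0 < r)
    (h : c ^ (d + 1) * y' ^ d ≤ (B * y) ^ (d + 1)) :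
    (y' / r ^ (d + 1)) ^ d ≤ (B * r / c * (y / r ^ (d + 1))) ^ (d + 1) := by
  calc (y' / r ^ (d + 1)) ^ d =
        c ^ (d + 1) * y' ^ d / (c ^ (d + 1) * (r ^ (d + 1)) ^ d) := by
        rw [mul_div_mul_left _ _ (by positivity), div_pow]
    _ ≤ (B * y) ^ (d + 1) / (c ^ (d + 1) * (r ^ (d + 1)) ^ d) := by gcongr
    _ = (B * y / (c * r ^ d)) ^ (d + 1) := by rw [div_pow, mul_pow c, pow_right_comm r d]
    _ = (B * r / c * (y / r ^ (d + 1))) ^ (d + 1) := by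
        congr 1
        field_simp
        ring

namespace IsBoundedSubsolution

variable {d : ℕ} {A : Euc (d + 1) → Euc (d + 1) → Euc (d + 1)} {b : Euc (d + 1) → ℝ}
  {p α C₁ C₂ r M : ℝ} {z : Euc (d + 1)} {v : Euc (d + 1) → ℝ}

theorem pow_measureReal_superlevel_le (h : IsBoundedSubsolution A b p α C₁ C₂ r M z v)
    (hp : 1 < p) (hα₀ : 0 ≤ α) (hα : α ≤ p) (hC₁ : 0 < C₁) (hC₂ : 0 < C₂) (hM : 0 < M) {S : ℝ}
    (hS₀ : 0 ≤ S)
    (hS : IsWeakSobolevConst ℝ (volume : Measure (Euc (d + 1))) d S)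
    {k k' ρ ρ' : ℝ} (hk : 0 ≤ k) (hkk' : k ≤ k') (hρ : 0 < ρ) (hρ' : ρ' ≤ ρ) (hρr : ρ < r)
    {c : ℝ} (hc : 0 ≤ c) (hgap : c ≤ (k' - k) * (1 - ρ' / ρ)) :
    (c ^ p) ^ (d + 1) * volume.real (superlevel v k' z ρ') ^ d ≤
      (S * (caccioppoliConst p C₁ C₂ * M ^ p / ρ) * volume.real (superlevel v k z ρ)) ^
        (d + 1) := by
  refine (hS _ (contDiff_deGiorgiTest hp hρ hρr h.contDiffOn)
    (hasCompactSupport_deGiorgiTest (by positivity) hρ) _ (Real.rpow_nonneg hc p) _ fun x hx =>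
      ((Real.rpow_le_rpow hc hgap (by positivity)).trans
        (rpow_mul_le_deGiorgiTest (by positivity) hρ' hρ.le hkk' hx)).trans
          (Real.le_norm_self _)).trans ?_
  rw [mul_assoc S]
  have : 0 ≤ ∫ x, ‖fderiv ℝ (deGiorgiTest p v k z ρ) x‖ := by positivity
  gcongr
  exact h.integral_norm_fderiv_deGiorgiTest_le hp hα₀ hα hC₁ hC₂ hM hk hρ hρr

theorem normalized_measureReal_superlevel_pow_le (h : IsBoundedSubsolution A b p α C₁ C₂ r M z v)
    (hp : 1 < p) (hα₀ : 0 ≤ α) (hα : α ≤ p) (hC₁ : 0 < C₁) (hC₂ : 0 < C₂) (hM : 0 < M)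
    (hr : 0 < r) {S : ℝ} (hS₀ : 0 ≤ S)
    (hS : IsWeakSobolevConst ℝ (volume : Measure (Euc (d + 1))) d S) {ε : ℝ} (hε : 0 < ε) (j : ℕ) :
    (volume.real (superlevel v (deGiorgiLevel (ε * M) (j + 1)) z (deGiorgiRadius r (j + 1))) /
        r ^ (d + 1)) ^ d ≤
      (8 * S * caccioppoliConst p C₁ C₂ * (8 / ε) ^ p * (4 ^ p) ^ j *
        (volume.real (superlevel v (deGiorgiLevel (ε * M) j) z (deGiorgiRadius r j)) /
          r ^ (d + 1))) ^ (d + 1) := by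
  have hm : 0 ≤ ε * M := by positivity
  have hρ := deGiorgiRadius_pos j hr
  have hρr : deGiorgiRadius r j < r := by linarith [deGiorgiRadius_le_div_four j hr.le]
  have hcacc := caccioppoliConst_pos (one_pos.trans hp) hC₁ hC₂
  set c := ε * M / 8 * (1 / 4) ^ j with hc_def
  have hstep := div_pow_le_of_pow_mul_pow_le (c := c ^ p) (by positivity) hr
    (h.pow_measureReal_superlevel_le hp hα₀ hα hC₁ hC₂ hM hS₀ hS (deGiorgiLevel_nonneg j hm)
      (deGiorgiLevel_le_succ j hm) hρ (deGiorgiRadius_succ_le j hr.le) hρr (by positivity)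
      (le_deGiorgiLevel_sub_mul_one_sub_deGiorgiRadius_div j hm hr))
  have hMc : M ^ p / c ^ p = (8 / ε) ^ p * (4 ^ p) ^ j := by
    rw [← Real.div_rpow hM.le (by positivity), Real.rpow_pow_comm (by norm_num),
      ← Real.mul_rpow (by positivity) (by positivity), hc_def, one_div_pow]
    congr 1
    field_simp
  have hr_div : r / deGiorgiRadius r j ≤ 8 := by
    rw [div_le_iff₀ hρ]
    linarith [div_eight_le_deGiorgiRadius j hr.le]
  have hconst : S * (caccioppoliConst p C₁ C₂ * M ^ p / deGiorgiRadius r j) * r / c ^ p ≤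
      8 * S * caccioppoliConst p C₁ C₂ * (8 / ε) ^ p * (4 ^ p) ^ j := by
    calc _ = r / deGiorgiRadius r j * (S * caccioppoliConst p C₁ C₂ * (M ^ p / c ^ p)) := by ring
      _ ≤ 8 * (S * caccioppoliConst p C₁ C₂ * (M ^ p / c ^ p)) := by gcongr
      _ = _ := by rw [hMc]; ring
  exact hstep.trans (by gcongr)

theorem tendsto_measureReal_superlevel (h : IsBoundedSubsolution A b p α C₁ C₂ r M z v)
    (hd : d ≠ 0) (hp : 1 < p) (hα₀ : 0 ≤ α) (hα : α ≤ p) (hC₁ : 0 < C₁) (hC₂ : 0 < C₂)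
    (hM : 0 < M) (hr : 0 < r) {S : ℝ} (hS₀ : 0 < S)
    (hS : IsWeakSobolevConst ℝ (volume : Measure (Euc (d + 1))) d S) {ε : ℝ} (hε : 0 < ε)
    (hvol : volume.real (superlevel v 0 z r) ≤ deGiorgiThreshold d S p C₁ C₂ ε * r ^ (d + 1)) :
    Tendsto (fun j => volume.real
      (superlevel v (deGiorgiLevel (ε * M) j) z (deGiorgiRadius r j))) atTop (nhds 0) := by
  have hcacc := caccioppoliConst_pos (one_pos.trans hp) hC₁ hC₂
  have hC : 0 < 8 * S * caccioppoliConst p C₁ C₂ * (8 / ε) ^ p := by positivity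
  have hL : (1 : ℝ) < 4 ^ p := Real.one_lt_rpow (by norm_num) (by positivity)
  have hzero : volume.real (superlevel v (deGiorgiLevel (ε * M) 0) z (deGiorgiRadius r 0)) /
      r ^ (d + 1) ≤ deGiorgiThreshold d S p C₁ C₂ ε := by
    rw [div_le_iff₀ (by positivity)]
    refine (measureReal_mono (superlevel_subset_superlevel (deGiorgiLevel_nonneg 0 ?_) ?_)
      measure_superlevel_ne_top).trans hvol
    · positivity
    · linarith [deGiorgiRadius_le_div_four 0 hr.le]
  have hlim := tendsto_zero_of_pow_le_mul_pow hd hC hL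
    (y := fun j => volume.real (superlevel v (deGiorgiLevel (ε * M) j) z (deGiorgiRadius r j)) /
      r ^ (d + 1)) (fun j => by positivity)
    (h.normalized_measureReal_superlevel_pow_le hp hα₀ hα hC₁ hC₂ hM hr hS₀.le hS hε) hzero
  simpa [div_mul_cancel₀ _ (pow_pos hr (d + 1)).ne'] using hlim.mul_const (r ^ (d + 1))

theorem le_of_volume_superlevel_le (h : IsBoundedSubsolution A b p α C₁ C₂ r M z v)
    (hd : d ≠ 0) (hp : 1 < p) (hα₀ : 0 ≤ α) (hα : α ≤ p) (hC₁ : 0 < C₁) (hC₂ : 0 < C₂)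
    (hM : 0 < M) (hr : 0 < r) {S : ℝ} (hS₀ : 0 < S)
    (hS : IsWeakSobolevConst ℝ (volume : Measure (Euc (d + 1))) d S) {ε : ℝ} (hε : 0 < ε)
    (hvol : volume.real (superlevel v 0 z r) ≤ deGiorgiThreshold d S p C₁ C₂ ε * r ^ (d + 1))
    {x : Euc (d + 1)} (hx : x ∈ ball z (r / 8)) : v x ≤ ε * M := by
  by_contra! hvx
  have hopen : IsOpen (superlevel v (ε * M) z (r / 8)) := isOpen_superlevel
    (h.contDiffOn.continuousOn.mono (ball_subset_ball (by linarith)))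
  have hpos : 0 < volume.real (superlevel v (ε * M) z (r / 8)) :=
    ENNReal.toReal_pos (hopen.measure_pos volume ⟨x, hx, hvx⟩).ne' measure_superlevel_ne_top
  refine hpos.not_ge (ge_of_tendsto'
    (h.tendsto_measureReal_superlevel hd hp hα₀ hα hC₁ hC₂ hM hr hS₀ hS hε hvol) fun j => ?_)
  exact measureReal_mono (superlevel_subset_superlevel (deGiorgiLevel_le j (by positivity))
    (div_eight_le_deGiorgiRadius j hr.le)) measure_superlevel_ne_top

end IsBoundedSubsolution

theorem LocBdd.ae_le_essSup_restrict_ball {n : ℕ} {b : Euc n → ℝ} (hb : LocBdd b) (z : Euc n)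
    (r : ℝ) : ∀ᵐ x ∂volume.restrict (ball z r), b x ≤ essSup b (volume.restrict (ball z r)) := by
  obtain ⟨B, hB⟩ := hb (closedBall z r) (isCompact_closedBall z r)
  refine ae_le_essSup ⟨B, ?_⟩
  rw [eventually_map]
  filter_upwards [ae_restrict_mem measurableSet_ball] with x hx
  exact hB x (ball_subset_closedBall hx)

theorem IsWeakSol.isBoundedSubsolution {n : ℕ} {A : Euc n → Euc n → Euc n} {b : Euc n → ℝ}
    {p α C₁ C₂ r : ℝ} {z : Euc n} {v : Euc n → ℝ}
    (hsol : IsWeakSol A b α (fun _ => 0) (ball z r) v) (hA : StructCond A p C₁ C₂)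
    (hbm : Measurable b) (hb₀ : ∀ x, 0 ≤ b x) (hb : LocBdd b) (hr : 0 ≤ r)
    (hv : ContDiffOn ℝ 1 v (ball z r)) (hbdd : BddAbove (v '' ball z r))
    (hM : 0 ≤ sSup (v '' ball z r))
    (hscale : r ^ (p - α) * sSup (v '' ball z r) ^ (α - p + 1) *
      essSup b (volume.restrict (ball z r)) ≤ C₁ / 2) :
    IsBoundedSubsolution A b p α C₁ C₂ r (sSup (v '' ball z r)) z v where
  structCond := hA
  measurable := hbm
  nonneg := hb₀
  locBdd := hb
  contDiffOn := hv
  le x hx := le_csSup hbdd (mem_image_of_mem v hx)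
  isWeakSol := hsol
  rescaled_le := by
    filter_upwards [hb.ae_le_essSup_restrict_ball z r] with x hx
    exact (mul_le_mul_of_nonneg_left hx (by positivity)).trans hscale

theorem stmt_14_general (n : ℕ) (hn : 2 ≤ n) (p C₁ C₂ α : ℝ) (hp : 1 < p)
    (hC₁ : 0 < C₁) (hC₂ : 0 < C₂) (hα₀ : 0 ≤ α) (hα : α ≤ p)
    (ε : ℝ) (hε : 0 < ε) :
    ∃ δ : ℝ, 0 < δ ∧
      ∀ (A : Euc n → Euc n → Euc n), StructCond A p C₁ C₂ →
      ∀ (b : Euc n → ℝ), Measurable b → (∀ x, 0 ≤ b x) → LocBdd b →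
      ∀ (r : ℝ) (z : Euc n) (v : Euc n → ℝ), 0 < r →
        ContDiffOn ℝ 1 v (ball z r) →
        BddAbove (v '' ball z r) → 0 ≤ sSup (v '' ball z r) →
        IsWeakSol A b α (fun _ => 0) (ball z r) v →
        r ^ (p - α) * sSup (v '' ball z r) ^ (α - p + 1) *
            essSup b (volume.restrict (ball z r)) ≤ C₁ / 2 →
        volume {x ∈ ball z r | 0 < v x} ≤ ENNReal.ofReal (δ * r ^ n) →
        sSup (v '' ball z (r / 8)) ≤ ε * sSup (v '' ball z r) := by
  obtain ⟨d, rfl⟩ : ∃ d, n = d + 1 := ⟨n - 1, by omega⟩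
  have hd : d ≠ 0 := by omega
  obtain ⟨S, hS₀, hS⟩ := exists_isWeakSobolevConst (E := Euc (d + 1)) volume ℝ hd (by simp)
  have hδ := deGiorgiThreshold_pos d hS₀ (one_pos.trans hp) hC₁ hC₂ hε
  refine ⟨deGiorgiThreshold d S p C₁ C₂ ε, hδ, ?_⟩
  intro A hA b hbm hb₀ hb r z v hr hv hbdd hM hsol hscale hvol
  have hsub := hsol.isBoundedSubsolution hA hbm hb₀ hb hr.le hv hbdd hM hscale
  refine csSup_le ((nonempty_ball.2 (by positivity)).image v) ?_
  rintro _ ⟨x, hx, rfl⟩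
  rcases hM.eq_or_lt with hM₀ | hM₀
  · rw [← hM₀, mul_zero, hM₀]
    exact hsub.le x (ball_subset_ball (by linarith) hx)
  · exact hsub.le_of_volume_superlevel_le hd hp hα₀ hα hC₁ hC₂ hM₀ hr hS₀ hS hε
      (ENNReal.toReal_le_of_le_ofReal (by positivity) hvol) hx

/-- Lemma 4.6: if the set where `v > 0` occupies a sufficiently small fraction of the ball
`B_r(z)`, then `sup_{B_{r/8}(z)} v ≤ ε sup_{B_r(z)} v`. -/
theorem stmt_14 (n : ℕ) (hn : 2 ≤ n) (p C₁ C₂ α : ℝ) (hp : 1 < p)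
    (hC₁ : 0 < C₁) (hC₂ : 0 < C₂) (hα₁ : p - 1 ≤ α) (hα₂ : α ≤ p)
    (ε : ℝ) (hε : 0 < ε) :
    ∃ δ : ℝ, 0 < δ ∧
      ∀ (A : Euc n → Euc n → Euc n), StructCond A p C₁ C₂ →
      ∀ (b : Euc n → ℝ), Measurable b → (∀ x, 0 ≤ b x) → LocBdd b →
      ∀ (r : ℝ) (z : Euc n) (v : Euc n → ℝ), 0 < r →
        ContDiffOn ℝ 1 v (Metric.ball z r) →
        (∀ x ∈ Metric.ball z r, 0 ≤ v x) →
        BddAbove (v '' Metric.ball z r) →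
        IsWeakSol A b α (fun _ => 0) (Metric.ball z r) v →
        r ^ (p - α) * sSup (v '' Metric.ball z r) ^ (α - p + 1) *
            essSup b (volume.restrict (Metric.ball z r)) ≤ C₁ / 2 →
        volume {x ∈ Metric.ball z r | 0 < v x} ≤ ENNReal.ofReal (δ * r ^ n) →
        sSup (v '' Metric.ball z (r / 8)) ≤ ε * sSup (v '' Metric.ball z r) := by
  obtain ⟨δ, hδ, h⟩ := stmt_14_general n hn p C₁ C₂ α hp hC₁ hC₂ (by linarith) hα₂ ε hε
  exact ⟨δ, hδ, fun A hA b hbm hb₀ hb r z v hr hv hv₀ hbdd =>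
    h A hA b hbm hb₀ hb r z v hr hv hbdd (Real.sSup_nonneg (forall_mem_image.2 hv₀))⟩
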